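/- arXiv:math/0610827 — 2 statements merged into one kernel-verified Lean document; each statement's English description precedes it below -/
import Mathlib

section
/- For k even, k ≥ 2, and fixed i < 0, ∑_{γ∈Γ_k} l_i(γ)² summed appropriately over levels satisfies ∑_{γ∈Γ_k} ∑_{i<0} l_i(γ)² = k·2^k, where l_i(γ) is the number of crossings of γ with the line y = i + 1/2. -/
/-- `γ` is a closed ±1-step path of length `k` whose maximum level is `0`. -/
def IsGammaPath (k : ℕ) (γ : Fin (k + 1) → ℤ) : Prop :=
  γ 0 = γ (Fin.last k) ∧
  (∀ u : Fin k, |γ u.succ - γ u.castSucc| = 1) ∧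
  (∀ u, γ u ≤ 0) ∧ (∃ u, γ u = 0)

/-- Number of crossings of `γ` with the horizontal line `y = i + 1/2`, i.e. the
number of steps `u` with `{γ u, γ (u+1)} = {i, i+1}`. -/
noncomputable def crossCount (k : ℕ) (i : ℤ) (γ : Fin (k + 1) → ℤ) : ℕ :=
  Nat.card {u : Fin k | ({γ u.castSucc, γ u.succ} : Set ℤ) = {i, i + 1}}

open Finset

theorem sum_antidiagonal_centralBinom_mul (n : ℕ) :
    ∑ x ∈ antidiagonal n, x.1.centralBinom * x.2.centralBinom = 4 ^ n := by
  have two_mul_weighted : ∀ n : ℕ,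
      2 * ∑ x ∈ antidiagonal n, x.1 * (x.1.centralBinom * x.2.centralBinom) =
        n * ∑ x ∈ antidiagonal n, x.1.centralBinom * x.2.centralBinom := by
    intro n
    have swap : ∑ x ∈ antidiagonal n, x.1 * (x.1.centralBinom * x.2.centralBinom) =
        ∑ x ∈ antidiagonal n, x.2 * (x.1.centralBinom * x.2.centralBinom) := by
      rw [← Nat.sum_antidiagonal_swap]
      exact sum_congr rfl fun x _ => by simp [mul_comm]
    rw [two_mul]
    nth_rw 2 [swap]
    rw [← sum_add_distrib, mul_sum]
    refine sum_congr rfl fun x hx => ?_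
    rw [← add_mul, mem_antidiagonal.1 hx]
  induction n with
  | zero => simp
  | succ n ih =>
    have weighted_succ : ∑ x ∈ antidiagonal (n + 1), x.1 * (x.1.centralBinom * x.2.centralBinom) =
        4 * ∑ x ∈ antidiagonal n, x.1 * (x.1.centralBinom * x.2.centralBinom) +
          2 * ∑ x ∈ antidiagonal n, x.1.centralBinom * x.2.centralBinom := by
      rw [Nat.sum_antidiagonal_succ, mul_sum, mul_sum, ← sum_add_distrib, zero_mul, zero_add]
      refine sum_congr rfl fun x _ => ?_
      rw [← mul_assoc, Nat.succ_mul_centralBinom_succ]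
      ring
    have h := two_mul_weighted (n + 1)
    rw [weighted_succ] at h
    have h' := two_mul_weighted n
    rw [ih] at h h'
    refine Nat.eq_of_mul_eq_mul_left n.succ_pos ?_
    rw [← h, Nat.succ_eq_add_one, pow_succ]
    linarith

/-- The number of subsets `T` of an `n`-element set with `r + 2 * #T = n + 1`, for `r ≤ 2`. -/
def balancedCount (r n : ℕ) : ℕ :=
  if Even (n + 1 + r) then n.choose ((n + 1 - r) / 2) else 0

theorem card_powerset_filter_balanced {α : Type*} (A : Finset α) {r : ℕ}
    (hr : r ≤ 2) : #{T ∈ A.powerset | r + 2 * #T = #A + 1} = balancedCount r #A := by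
  unfold balancedCount
  split_ifs with h
  · rw [← card_powersetCard]
    congr 1
    ext T
    simp only [mem_filter, mem_powerset, mem_powersetCard]
    rw [Nat.even_iff] at h
    refine and_congr_right fun hT => ?_
    omega
  · rw [card_eq_zero, filter_eq_empty_iff]
    intro T _ hT
    rw [Nat.even_iff] at h
    omega

/-- The number of balanced step sets in which two given steps, with `a` steps between them and `b`
other steps, traverse the same edge. -/
def pairCount (a b : ℕ) : ℕ :=
  balancedCount 0 a * balancedCount 0 b + 2 * (balancedCount 1 a * balancedCount 1 b) +
    balancedCount 2 a * balancedCount 2 b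

theorem pairCount_comm (a b : ℕ) : pairCount a b = pairCount b a := by
  unfold pairCount; ring

theorem pairCount_even (m l : ℕ) :
    pairCount (2 * m) (2 * l) = 2 * (m.centralBinom * l.centralBinom) := by
  simp [pairCount, balancedCount, Nat.centralBinom, parity_simps]

theorem two_mul_choose_succ (m : ℕ) :
    2 * (2 * m + 1).choose (m + 1) = (m + 1).centralBinom := by
  rw [Nat.centralBinom, show 2 * (m + 1) = 2 * m + 1 + 1 by ring, Nat.choose_succ_succ (2 * m + 1) m,
    Nat.succ_eq_add_one, Nat.choose_symm_half]
  ring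

theorem two_mul_pairCount_odd (m l : ℕ) :
    2 * pairCount (2 * m + 1) (2 * l + 1) = (m + 1).centralBinom * (l + 1).centralBinom := by
  rw [← two_mul_choose_succ, ← two_mul_choose_succ]
  have e1 (m : ℕ) : (2 * m + 1 + 1) / 2 = m + 1 := by omega
  simp [pairCount, balancedCount, parity_simps, e1, Nat.choose_symm_half]
  ring

theorem card_filter_pair {α : Type*} [Fintype α] [DecidableEq α] {A B : Finset α} {u v : α}
    (huA : u ∉ A) (huB : u ∉ B) (hvA : v ∉ A) (hvB : v ∉ B) (huv : u ≠ v) (hAB : Disjoint A B)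
    (cover : ∀ w, w ∈ A ∨ w ∈ B ∨ w = u ∨ w = v) (p q : Bool) (P Q : ℕ → Prop)
    [DecidablePred P] [DecidablePred Q] :
    #{S : Finset α | (decide (u ∈ S), decide (v ∈ S)) = (p, q) ∧ P #(S ∩ A) ∧ Q #(S ∩ B)} =
      #{T ∈ A.powerset | P #T} * #{T ∈ B.powerset | Q #T} := by
  rw [← card_product]
  have hd : ∀ w, w ∈ A → w ∉ B := fun w hA hB => disjoint_left.1 hAB hA hB
  let D : Finset α := {w | w = u ∧ p = true ∨ w = v ∧ q = true}
  have hDA : ∀ T ⊆ A, ∀ U ⊆ B, (T ∪ U ∪ D) ∩ A = T := by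
    intro T hT U hU
    ext w
    have := hd w
    have := @hT w
    have := @hU w
    simp only [D, mem_inter, mem_union, mem_filter, mem_univ, true_and]
    grind
  have hDB : ∀ T ⊆ A, ∀ U ⊆ B, (T ∪ U ∪ D) ∩ B = U := by
    intro T hT U hU
    ext w
    have := hd w
    have := @hT w
    have := @hU w
    simp only [D, mem_inter, mem_union, mem_filter, mem_univ, true_and]
    grind
  refine card_nbij' (fun S => (S ∩ A, S ∩ B)) (fun x => x.1 ∪ x.2 ∪ D) ?_ ?_ ?_ ?_
  · intro S hS
    simp only [coe_filter, mem_univ, true_and, Set.mem_ofPred_eq] at hS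
    simp [hS.2.1, hS.2.2]
  · rintro ⟨T, U⟩ h
    simp only [coe_product, coe_filter, mem_powerset, Set.mem_prod, Set.mem_ofPred_eq] at h
    obtain ⟨⟨hT, hP⟩, hU, hQ⟩ := h
    simp only [coe_filter, mem_univ, true_and, Set.mem_ofPred_eq, hDA T hT U hU, hDB T hT U hU,
      hP, hQ, and_true, Prod.mk.injEq]
    have := @hT u
    have := @hU u
    have := @hT v
    have := @hU v
    cases p <;> cases q <;> simp [D] <;> grind
  · intro S hS
    simp only [coe_filter, mem_univ, true_and, Set.mem_ofPred_eq, Prod.mk.injEq] at hS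
    ext w
    have := cover w
    simp only [D, mem_inter, mem_union, mem_filter, mem_univ, true_and]
    grind
  · rintro ⟨T, U⟩ h
    simp only [coe_product, coe_filter, mem_powerset, Set.mem_prod, Set.mem_ofPred_eq] at h
    simp only [hDA T h.1.1 U h.2.1, hDB T h.1.1 U h.2.1]

theorem card_filter_balanced_pair {α : Type*} [Fintype α] [DecidableEq α] {A B : Finset α}
    {u v : α} (huA : u ∉ A) (huB : u ∉ B) (hvA : v ∉ A) (hvB : v ∉ B) (huv : u ≠ v)
    (hAB : Disjoint A B) (cover : ∀ w, w ∈ A ∨ w ∈ B ∨ w = u ∨ w = v) :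
    #{S : Finset α |
      (decide (u ∈ S)).toNat + (decide (v ∈ S)).toNat + 2 * #(S ∩ A) = #A + 1 ∧
      (decide (u ∈ S)).toNat + (decide (v ∈ S)).toNat + 2 * #(S ∩ B) = #B + 1} =
      pairCount #A #B := by
  rw [card_eq_sum_card_fiberwise (t := univ)
    (f := fun S : Finset α => (decide (u ∈ S), decide (v ∈ S))) (by simp [Set.MapsTo])]
  have fiber (p q : Bool) : #{S ∈ ({S : Finset α |
      (decide (u ∈ S)).toNat + (decide (v ∈ S)).toNat + 2 * #(S ∩ A) = #A + 1 ∧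
      (decide (u ∈ S)).toNat + (decide (v ∈ S)).toNat + 2 * #(S ∩ B) = #B + 1} :
        Finset (Finset α)) | (decide (u ∈ S), decide (v ∈ S)) = (p, q)} =
      balancedCount (p.toNat + q.toNat) #A * balancedCount (p.toNat + q.toNat) #B := by
    have hpq : p.toNat + q.toNat ≤ 2 := by cases p <;> cases q <;> simp
    rw [← card_powerset_filter_balanced A hpq, ← card_powerset_filter_balanced B hpq,
      ← card_filter_pair huA huB hvA hvB huv hAB cover p q
        (fun t => p.toNat + q.toNat + 2 * t = #A + 1) (fun t => p.toNat + q.toNat + 2 * t = #B + 1),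
      filter_filter]
    congr 1
    ext S
    simp only [mem_filter, mem_univ, true_and, Prod.mk.injEq]
    constructor
    · rintro ⟨h, rfl, rfl⟩
      exact ⟨⟨rfl, rfl⟩, h⟩
    · rintro ⟨⟨rfl, rfl⟩, h⟩
      exact ⟨h, rfl, rfl⟩
  rw [Fintype.sum_prod_type]
  simp only [fiber, Fintype.sum_bool, Bool.toNat_true, Bool.toNat_false]
  unfold pairCount
  ring

/-- The lower endpoint, relative to the starting level, of the edge traversed by step `u` of the
path with set of up-steps `S`. -/
def edgeLevel {k : ℕ} (S : Finset (Fin k)) (u : Fin k) : ℤ :=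
  2 * #{w ∈ S | w < u} - u + (decide (u ∈ S)).toNat - 1

theorem card_edgeLevel_eq {k : ℕ} {u v : Fin k} (h : u < v) :
    #{S : Finset (Fin k) | 2 * #S = k ∧ edgeLevel S u = edgeLevel S v} =
      pairCount (v - u - 1) (k - 1 - (v - u)) := by
  have hA : #(Ioo u v) = v - u - 1 := by simp
  have hB : #(Icc u v)ᶜ = k - 1 - (v - u) := by
    have := u.2
    have : u.val < v.val := h
    rw [card_compl, Fintype.card_fin, Fin.card_Icc]
    omega
  rw [← hA, ← hB, ← card_filter_balanced_pair (u := u) (v := v) (by simp) (by simp [h.le]) (by simp)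
    (by simp [h.le]) h.ne
    (disjoint_left.2 fun w hw => by simp at hw ⊢; exact ⟨hw.1.le, hw.2.le⟩)
    (fun w => by simp; omega)]
  congr 1
  ext S
  simp only [mem_filter, mem_univ, true_and]
  have hv : #{w ∈ S | w < v} = #{w ∈ S | w < u} + (decide (u ∈ S)).toNat + #(S ∩ Ioo u v) := by
    have : ({w ∈ S | w < v} : Finset (Fin k)) =
        ({w ∈ S | w < u} ∪ {w ∈ S | w = u}) ∪ (S ∩ Ioo u v) := by
      ext w
      simp only [mem_filter, mem_union, mem_inter, mem_Ioo]
      grind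
    rw [this, card_union_of_disjoint, card_union_of_disjoint, filter_eq']
    · split_ifs with hu <;> simp [hu]
    · exact disjoint_left.2 fun w hw => by simp at hw ⊢; grind
    · exact disjoint_left.2 fun w hw => by simp at hw ⊢; grind
  have hS : #S = (decide (u ∈ S)).toNat + (decide (v ∈ S)).toNat + #(S ∩ Ioo u v) +
      #(S ∩ (Icc u v)ᶜ) := by
    have : S = ((({w ∈ S | w = u} : Finset (Fin k)) ∪ {w ∈ S | w = v}) ∪ (S ∩ Ioo u v)) ∪
        (S ∩ (Icc u v)ᶜ) := by
      ext w
      simp only [mem_filter, mem_union, mem_inter, mem_Ioo, mem_compl, mem_Icc]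
      grind
    conv_lhs => rw [this]
    rw [card_union_of_disjoint, card_union_of_disjoint, card_union_of_disjoint, filter_eq',
      filter_eq']
    · by_cases hu : u ∈ S <;> by_cases hvS : v ∈ S <;> simp [hu, hvS]
    all_goals exact disjoint_left.2 fun w hw => by simp at hw ⊢; grind
  have h1 : u.val < v.val := h
  have h2 := v.2
  unfold edgeLevel
  rw [hv, hS, hA, hB]
  push_cast
  omega

theorem card_edgeLevel_eq_sub {k : ℕ} (u v : Fin k) :
    #{S : Finset (Fin k) | 2 * #S = k ∧ edgeLevel S u = edgeLevel S v} =
      if (v - u).val = 0 then #{S : Finset (Fin k) | 2 * #S = k} else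
        pairCount ((v - u).val - 1) (k - 1 - (v - u).val) := by
  rcases lt_trichotomy u v with h | rfl | h
  · have h1 : u.val < v.val := h
    rw [card_edgeLevel_eq h, Fin.sub_val_of_le h.le, if_neg (by omega)]
  · simp [Fin.sub_val_of_le le_rfl]
  · have h1 : v.val < u.val := h
    have h2 := u.2
    have hval : (v - u).val = k - (u - v) := by
      rw [Fin.coe_sub_iff_lt.2 h]
      omega
    simp only [eq_comm (a := edgeLevel _ u)]
    rw [card_edgeLevel_eq h, hval, if_neg (by omega), pairCount_comm]
    congr 1 <;> omega

theorem card_two_mul_card_eq (n : ℕ) :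
    #{S : Finset (Fin (2 * n)) | 2 * #S = 2 * n} = n.centralBinom := by
  have : ({S : Finset (Fin (2 * n)) | 2 * #S = 2 * n} : Finset _) = powersetCard n univ := by
    ext S
    simp [mem_powersetCard]
  rw [this, card_powersetCard, card_univ, Fintype.card_fin, Nat.centralBinom]

theorem sum_range_pairCount {n : ℕ} (hn : 0 < n) :
    (∑ d ∈ range (2 * n), if d = 0 then n.centralBinom else pairCount (d - 1) (2 * n - 1 - d)) =
      4 ^ n := by
  have split : ∀ (f : ℕ → ℕ) (n : ℕ), ∑ d ∈ range (2 * n), f d =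
      ∑ m ∈ range n, f (2 * m) + ∑ m ∈ range n, f (2 * m + 1) := by
    intro f n
    induction n with
    | zero => simp
    | succ n ih =>
      rw [mul_add, mul_one, sum_range_succ, sum_range_succ, ih, sum_range_succ, sum_range_succ]
      ring
  obtain ⟨N, rfl⟩ := Nat.exists_eq_add_of_lt hn
  rw [zero_add, split]
  have odd : ∑ m ∈ range (N + 1), (if 2 * m + 1 = 0 then (N + 1).centralBinom else
      pairCount (2 * m + 1 - 1) (2 * (N + 1) - 1 - (2 * m + 1))) = 2 * 4 ^ N := by
    rw [← sum_antidiagonal_centralBinom_mul, Nat.sum_antidiagonal_eq_sum_range_succ_mk, mul_sum]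
    refine sum_congr rfl fun m hm => ?_
    rw [mem_range] at hm
    rw [if_neg (by omega), ← pairCount_even]
    congr 1
    omega
  have even : 2 * ∑ m ∈ range (N + 1), (if 2 * m = 0 then (N + 1).centralBinom else
      pairCount (2 * m - 1) (2 * (N + 1) - 1 - 2 * m)) = 4 ^ (N + 1) := by
    rw [sum_range_succ', ← sum_antidiagonal_centralBinom_mul,
      Nat.sum_antidiagonal_eq_sum_range_succ_mk, sum_range_succ, sum_range_succ', mul_add, mul_sum]
    simp only [mul_zero, if_true, Nat.sub_zero, Nat.centralBinom_zero, one_mul, Nat.sub_self,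
      mul_one]
    rw [two_mul (N + 1).centralBinom, ← add_assoc]
    congr 2
    refine sum_congr rfl fun m hm => ?_
    rw [mem_range] at hm
    obtain ⟨l, rfl⟩ := Nat.exists_eq_add_of_lt hm
    rw [if_neg (by omega), show m + l + 1 + 1 - (m + 1) = l + 1 by omega, ← two_mul_pairCount_odd]
    congr 2
    omega
  rw [odd]
  rw [pow_succ] at even ⊢
  omega

theorem sum_card_edgeLevel_eq {n : ℕ} (hn : 0 < n) (u : Fin (2 * n)) :
    ∑ v, #{S : Finset (Fin (2 * n)) | 2 * #S = 2 * n ∧ edgeLevel S u = edgeLevel S v} =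
      4 ^ n := by
  have : NeZero (2 * n) := ⟨by omega⟩
  simp only [card_edgeLevel_eq_sub, card_two_mul_card_eq]
  refine ((Equiv.subRight u).sum_comp fun d : Fin (2 * n) => if d.val = 0 then n.centralBinom else
    pairCount (d.val - 1) (2 * n - 1 - d.val)).trans ?_
  rw [Fin.sum_univ_eq_sum_range
      fun d => if d = 0 then n.centralBinom else pairCount (d - 1) (2 * n - 1 - d),
    sum_range_pairCount hn]

theorem sum_card_edgeLevel_pairs {n : ℕ} (hn : 0 < n) :
    ∑ S : Finset (Fin (2 * n)) with 2 * #S = 2 * n,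
      #{x : Fin (2 * n) × Fin (2 * n) | edgeLevel S x.1 = edgeLevel S x.2} =
      2 * n * 4 ^ n := by
  simp only [card_filter]
  rw [sum_comm, Fintype.sum_prod_type]
  simp only [← card_filter, filter_filter, sum_card_edgeLevel_eq hn]
  simp

theorem finsum_neg_sq_card_fiber {ι : Type*} [Fintype ι] [DecidableEq ι] (e : ι → ℤ)
    (he : ∀ u, e u < 0) :
    ∑ᶠ i ∈ {i : ℤ | i < 0}, (#{u | e u = i} : ℤ) ^ 2 = #{x : ι × ι | e x.1 = e x.2} := by
  rw [finsum_mem_eq_sum_of_inter_support_eq (t := univ.image e)]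
  · rw [card_eq_sum_card_fiberwise (f := fun x => e x.1) (t := univ.image e)
      (by simp [Set.MapsTo])]
    push_cast
    refine sum_congr rfl fun i _ => ?_
    rw [sq, ← Nat.cast_mul, ← card_product]
    congr 2
    ext x
    simp only [mem_product, mem_filter, mem_univ, true_and]
    grind
  · ext i
    simp only [Set.mem_inter_iff, Set.mem_ofPred_eq, Function.mem_support, coe_image, coe_univ,
      Set.image_univ, Set.mem_range]
    refine and_congr_left fun hi => ⟨fun _ => ?_, ?_⟩
    · by_contra! h
      simp [filter_false_of_mem fun u _ => h u] at hi
    · rintro ⟨u, rfl⟩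
      exact he u

/-- The set of up-steps of a path. -/
def upSteps {k : ℕ} (γ : Fin (k + 1) → ℤ) : Finset (Fin k) :=
  {u | γ u.castSucc < γ u.succ}

/-- The level after `j` steps, relative to the start, of the path with set of up-steps `S`. -/
def height {k : ℕ} (S : Finset (Fin k)) (j : Fin (k + 1)) : ℤ :=
  2 * #{w ∈ S | w.castSucc < j} - j

theorem height_zero {k : ℕ} (S : Finset (Fin k)) : height S 0 = 0 := by
  simp [height]

theorem height_last {k : ℕ} (S : Finset (Fin k)) : height S (Fin.last k) = 2 * #S - k := by
  simp [height, Fin.castSucc_lt_last]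

theorem height_succ {k : ℕ} (S : Finset (Fin k)) (u : Fin k) :
    height S u.succ = height S u.castSucc + (2 * (decide (u ∈ S)).toNat - 1) := by
  have h : ({w ∈ S | w.castSucc < u.succ} : Finset (Fin k)) =
      {w ∈ S | w.castSucc < u.castSucc} ∪ {w ∈ S | w = u} := by
    ext w
    simp only [mem_filter, mem_union, Fin.castSucc_lt_succ_iff, Fin.castSucc_lt_castSucc_iff]
    grind
  have hc : #{w ∈ S | w.castSucc < u.succ} =
      #{w ∈ S | w.castSucc < u.castSucc} + (decide (u ∈ S)).toNat := by
    rw [h, card_union_of_disjoint, filter_eq']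
    · by_cases hu : u ∈ S <;> simp [hu]
    · exact disjoint_left.2 fun w hw => by simp at hw ⊢; grind
  unfold height
  rw [hc]
  push_cast
  simp
  ring

theorem edgeLevel_eq_height {k : ℕ} (S : Finset (Fin k)) (u : Fin k) :
    edgeLevel S u = height S u.castSucc + (decide (u ∈ S)).toNat - 1 := by
  simp [edgeLevel, height]

theorem upSteps_height_add {k : ℕ} (S : Finset (Fin k)) (c : ℤ) :
    upSteps (fun j => height S j + c) = S := by
  ext u
  by_cases hu : u ∈ S <;> simp [upSteps, height_succ, hu]

theorem eq_height_upSteps {k : ℕ} {γ : Fin (k + 1) → ℤ}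
    (hγ : ∀ u : Fin k, |γ u.succ - γ u.castSucc| = 1) (j : Fin (k + 1)) :
    γ j = γ 0 + height (upSteps γ) j := by
  induction j using Fin.induction with
  | zero => simp [height_zero]
  | succ u ih =>
    rw [height_succ, ← add_assoc, ← ih]
    have := (abs_eq zero_le_one).1 (hγ u)
    by_cases hu : γ u.castSucc < γ u.succ <;> simp [upSteps, hu] <;> omega

theorem crossCount_eq_card {k : ℕ} {γ : Fin (k + 1) → ℤ}
    (hγ : ∀ u : Fin k, |γ u.succ - γ u.castSucc| = 1) (i : ℤ) :
    crossCount k i γ = #{u | γ 0 + edgeLevel (upSteps γ) u = i} := by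
  rw [crossCount, ← Nat.card_eq_finsetCard]
  refine Nat.card_congr (Equiv.subtypeEquivRight fun u => ?_)
  have hu : u ∈ upSteps γ ↔ γ u.castSucc < γ u.succ := by simp [upSteps]
  have hlevel : γ 0 + edgeLevel (upSteps γ) u =
      γ u.castSucc + (decide (u ∈ upSteps γ)).toNat - 1 := by
    rw [edgeLevel_eq_height, eq_height_upSteps hγ u.castSucc]
    ring
  have hstep := (abs_eq zero_le_one).1 (hγ u)
  simp only [Set.mem_ofPred_eq, mem_filter, mem_univ, true_and, hlevel, hu, Set.pair_eq_pair_iff]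
  by_cases h : γ u.castSucc < γ u.succ <;> simp [h] <;> omega

theorem finsum_crossCount_sq {k : ℕ} {γ : Fin (k + 1) → ℤ} (hγ : IsGammaPath k γ) :
    ∑ᶠ i ∈ {i : ℤ | i < 0}, (crossCount k i γ : ℤ) ^ 2 =
      #{x : Fin k × Fin k | edgeLevel (upSteps γ) x.1 = edgeLevel (upSteps γ) x.2} := by
  obtain ⟨-, hstep, hle, -⟩ := hγ
  simp only [crossCount_eq_card hstep]
  rw [finsum_neg_sq_card_fiber]
  · simp
  · intro u
    have h1 := hle u.castSucc
    have h2 := hle u.succ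
    rw [eq_height_upSteps hstep] at h1 h2
    rw [height_succ] at h2
    rw [edgeLevel_eq_height]
    by_cases hu : u ∈ upSteps γ <;> simp [hu] at h2 ⊢ <;> omega

theorem bijOn_upSteps (k : ℕ) :
    Set.BijOn upSteps {γ | IsGammaPath k γ}
      (({S : Finset (Fin k) | 2 * #S = k} : Finset (Finset (Fin k))) : Set (Finset (Fin k))) := by
  refine ⟨?_, ?_, ?_⟩
  · rintro γ ⟨hclosed, hstep, -, -⟩
    have h := eq_height_upSteps hstep (Fin.last k)
    rw [height_last, ← hclosed] at h
    simp only [coe_filter, mem_univ, true_and, Set.mem_ofPred_eq]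
    omega
  · rintro γ ⟨-, hγ, hγle, a, ha⟩ δ ⟨-, hδ, hδle, b, hb⟩ h
    have h0 : γ 0 = δ 0 := by
      have h1 := hγle b
      have h2 := hδle a
      rw [eq_height_upSteps hγ] at ha h1
      rw [eq_height_upSteps hδ] at hb h2
      rw [h] at ha h1
      omega
    funext j
    rw [eq_height_upSteps hγ, eq_height_upSteps hδ, h, h0]
  · intro S hS
    simp only [coe_filter, mem_univ, true_and, Set.mem_ofPred_eq] at hS
    obtain ⟨a, ha⟩ := Finite.exists_max (height S)
    refine ⟨fun j => height S j + -height S a, ⟨?_, ?_, ?_, ?_⟩, upSteps_height_add S _⟩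
    · simp only [height_zero, height_last]
      omega
    · intro u
      simp only [height_succ]
      by_cases hu : u ∈ S <;> simp [hu]
    · intro j
      simpa using ha j
    · exact ⟨a, by simp⟩

theorem stmt7 (k : ℕ) (hk : Even k) (h2 : 2 ≤ k) :
    ∑ᶠ γ ∈ {γ : Fin (k + 1) → ℤ | IsGammaPath k γ},
        ∑ᶠ i ∈ {i : ℤ | i < 0}, (crossCount k i γ : ℤ) ^ 2
      = (k : ℤ) * 2 ^ k := by
  obtain ⟨n, rfl⟩ := hk.two_dvd
  rw [finsum_mem_eq_of_bijOn
      (g := fun S => (#{x : Fin (2 * n) × Fin (2 * n) | edgeLevel S x.1 = edgeLevel S x.2} : ℤ))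
      upSteps (bijOn_upSteps (2 * n)) fun γ hγ => finsum_crossCount_sq hγ,
    finsum_mem_coe_finset, ← Nat.cast_sum, sum_card_edgeLevel_pairs (by omega), pow_mul]
  norm_num
end

section
/- For α = 1/2, the distribution of T^{1/2}·W, where W is arcsine-distributed on [−2,2] and T is independent uniform on [0,1], is the semicircle law with density (1/(2π))·√(4−x²) on [−2,2]; equivalently, its even moments are C(k,k/2)/(k/2+1), the Catalan numbers. -/
open MeasureTheory ProbabilityTheory

/-- The arcsine law on `[-2, 2]`, with density `1 / (π √(4 - x²))`. -/
noncomputable def arcsineLaw : Measure ℝ :=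
  volume.withDensity fun x =>
    ENNReal.ofReal
      (Set.indicator (Set.Ioo (-2 : ℝ) 2)
        (fun x => 1 / (Real.pi * Real.sqrt (4 - x ^ 2))) x)

/-- The semicircle law on `[-2, 2]`, with density `√(4 - x²) / (2π)`. -/
noncomputable def semicircleLaw : Measure ℝ :=
  volume.withDensity fun x =>
    ENNReal.ofReal
      (Set.indicator (Set.Icc (-2 : ℝ) 2)
        (fun x => Real.sqrt (4 - x ^ 2) / (2 * Real.pi)) x)

/-- The primitive `√(4t - x²) / (2π)` of `1 / (π √(4t - x²))` gives the mixture density. -/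
lemma lintegral_inv_sqrt_four_mul_sub_sq (x : ℝ) :
    ∫⁻ t in Set.Ioc (0 : ℝ) 1, ENNReal.ofReal (1 / (Real.pi * Real.sqrt (4 * t - x ^ 2))) =
      ENNReal.ofReal (Set.indicator (Set.Icc (-2 : ℝ) 2)
        (fun x => Real.sqrt (4 - x ^ 2) / (2 * Real.pi)) x) := by
  have hzero : ∀ t : ℝ, 4 * t ≤ x ^ 2 →
      ENNReal.ofReal (1 / (Real.pi * Real.sqrt (4 * t - x ^ 2))) = 0 := by
    intro t ht
    rw [Real.sqrt_eq_zero_of_nonpos (by linarith)]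
    simp
  have hR : Set.indicator (Set.Icc (-2 : ℝ) 2)
        (fun x => Real.sqrt (4 - x ^ 2) / (2 * Real.pi)) x =
          Real.sqrt (4 - x ^ 2) / (2 * Real.pi) := by
    by_cases hx : x ∈ Set.Icc (-2 : ℝ) 2
    · rw [Set.indicator_of_mem hx]
    · rw [Set.indicator_of_notMem hx, Real.sqrt_eq_zero_of_nonpos, zero_div]
      by_contra! h
      exact hx ⟨by nlinarith, by nlinarith⟩
  rw [hR]
  rcases le_or_gt 4 (x ^ 2) with hx | hx
  · rw [Real.sqrt_eq_zero_of_nonpos (by linarith), zero_div, ENNReal.ofReal_zero]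
    refine (setLIntegral_congr_fun measurableSet_Ioc fun t ht => hzero t ?_).trans (by simp)
    linarith [ht.2]
  · have hc : x ^ 2 / 4 < 1 := by linarith
    have hsub : Set.Ioc (x ^ 2 / 4) 1 ⊆ Set.Ioc (0 : ℝ) 1 :=
      Set.Ioc_subset_Ioc_left (by positivity)
    have hcont : ContinuousOn (fun t : ℝ => Real.sqrt (4 * t - x ^ 2) / (2 * Real.pi))
        (Set.Icc (x ^ 2 / 4) 1) := by fun_prop
    have hderiv : ∀ t ∈ Set.Ioo (x ^ 2 / 4) 1,
        HasDerivAt (fun t : ℝ => Real.sqrt (4 * t - x ^ 2) / (2 * Real.pi))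
          (1 / (Real.pi * Real.sqrt (4 * t - x ^ 2))) t := by
      intro t ht
      have hpos : 0 < 4 * t - x ^ 2 := by linarith [ht.1]
      have h1 : HasDerivAt (fun t : ℝ => 4 * t - x ^ 2) (4 * 1) t :=
        ((hasDerivAt_id t).const_mul 4).sub_const _
      have h2 := (h1.sqrt hpos.ne').div_const (2 * Real.pi)
      have h3 := Real.sqrt_pos.2 hpos
      have h4 : 1 / (Real.pi * Real.sqrt (4 * t - x ^ 2)) =
          4 * 1 / (2 * Real.sqrt (4 * t - x ^ 2)) / (2 * Real.pi) := by
        field_simp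
        norm_num
      rwa [h4]
    have hint := intervalIntegral.integrableOn_deriv_of_nonneg hcont hderiv
      fun t _ => by positivity
    have hftc := intervalIntegral.integral_eq_sub_of_hasDerivAt_of_le hc.le hcont hderiv
      ((intervalIntegrable_iff_integrableOn_Ioc_of_le hc.le).2 hint)
    have hrestr : ∫⁻ t in Set.Ioc (x ^ 2 / 4) 1,
          ENNReal.ofReal (1 / (Real.pi * Real.sqrt (4 * t - x ^ 2))) =
        ∫⁻ t in Set.Ioc (0 : ℝ) 1,
          ENNReal.ofReal (1 / (Real.pi * Real.sqrt (4 * t - x ^ 2))) := by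
      rw [← lintegral_indicator measurableSet_Ioc, ← lintegral_indicator measurableSet_Ioc]
      refine lintegral_congr fun t => ?_
      by_cases ht : t ∈ Set.Ioc (x ^ 2 / 4) 1
      · rw [Set.indicator_of_mem ht, Set.indicator_of_mem (hsub ht)]
      · rw [Set.indicator_of_notMem ht]
        by_cases ht' : t ∈ Set.Ioc (0 : ℝ) 1
        · rw [Set.indicator_of_mem ht', hzero t]
          by_contra! h
          exact ht ⟨by linarith, ht'.2⟩
        · rw [Set.indicator_of_notMem ht']
    rw [← hrestr, ← ofReal_integral_eq_lintegral_ofReal hint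
      (Filter.Eventually.of_forall fun t => by positivity),
      ← intervalIntegral.integral_of_le hc.le, hftc]
    congr 1
    have : 4 * (x ^ 2 / 4) - x ^ 2 = 0 := by ring
    simp [this]

/-- Rescaling the arcsine density by `√t`. -/
lemma ofReal_inv_sqrt_mul_arcsine_density {t : ℝ} (ht : 0 < t) (x : ℝ) :
    ENNReal.ofReal (Real.sqrt t)⁻¹ * ENNReal.ofReal (Set.indicator (Set.Ioo (-2 : ℝ) 2)
        (fun x => 1 / (Real.pi * Real.sqrt (4 - x ^ 2))) ((Real.sqrt t)⁻¹ * x)) =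
      ENNReal.ofReal (1 / (Real.pi * Real.sqrt (4 * t - x ^ 2))) := by
  have hs := Real.sqrt_pos.2 ht
  have hsq := Real.sq_sqrt ht.le
  have hind : Set.indicator (Set.Ioo (-2 : ℝ) 2)
        (fun x => 1 / (Real.pi * Real.sqrt (4 - x ^ 2))) ((Real.sqrt t)⁻¹ * x) =
      1 / (Real.pi * Real.sqrt (4 - ((Real.sqrt t)⁻¹ * x) ^ 2)) := by
    by_cases h : (Real.sqrt t)⁻¹ * x ∈ Set.Ioo (-2 : ℝ) 2
    · rw [Set.indicator_of_mem h]
    · rw [Set.indicator_of_notMem h, Real.sqrt_eq_zero_of_nonpos]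
      · simp
      · by_contra! h'
        exact h ⟨by nlinarith, by nlinarith⟩
  have hmul : Real.sqrt (4 * t - x ^ 2) =
      Real.sqrt t * Real.sqrt (4 - ((Real.sqrt t)⁻¹ * x) ^ 2) := by
    rw [← Real.sqrt_mul ht.le]
    congr 1
    rw [mul_pow, inv_pow, hsq]
    field_simp
  rw [← ENNReal.ofReal_mul (by positivity), hind, hmul]
  congr 1
  simp only [one_div, mul_inv]
  ring

lemma measurable_arcsine_density : Measurable fun x : ℝ =>
    ENNReal.ofReal (Set.indicator (Set.Ioo (-2 : ℝ) 2)
      (fun x => 1 / (Real.pi * Real.sqrt (4 - x ^ 2))) x) :=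
  ((by fun_prop : Measurable fun x : ℝ => 1 / (Real.pi * Real.sqrt (4 - x ^ 2))).indicator
    measurableSet_Ioo).ennreal_ofReal

/-- Integration against the arcsine law dilated by `√t`. -/
lemma lintegral_arcsineLaw_sqrt_mul {f : ℝ → ENNReal} (hf : Measurable f) {t : ℝ} (ht : 0 < t) :
    ∫⁻ w, f (Real.sqrt t * w) ∂arcsineLaw =
      ∫⁻ x, ENNReal.ofReal (1 / (Real.pi * Real.sqrt (4 * t - x ^ 2))) * f x := by
  have hs := Real.sqrt_pos.2 ht
  rw [arcsineLaw, lintegral_withDensity_eq_lintegral_mul _ measurable_arcsine_density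
    (by fun_prop)]
  set A := fun x : ℝ => ENNReal.ofReal (Set.indicator (Set.Ioo (-2 : ℝ) 2)
      (fun x => 1 / (Real.pi * Real.sqrt (4 - x ^ 2))) x)
  have hAm : Measurable A := measurable_arcsine_density
  conv_lhs => rw [← Real.smul_map_volume_mul_left (inv_ne_zero hs.ne')]
  rw [lintegral_smul_measure,
    lintegral_map (by simp only [Pi.mul_def]; fun_prop) (by fun_prop), abs_of_pos (by positivity),
    smul_eq_mul, ← lintegral_const_mul _ (by simp only [Pi.mul_def]; fun_prop)]
  refine lintegral_congr fun x => ?_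
  rw [← ofReal_inv_sqrt_mul_arcsine_density ht x, Pi.mul_apply, ← mul_assoc]
  congr 2
  field_simp

instance : SFinite arcsineLaw := by unfold arcsineLaw; infer_instance

/-- The multiplicative mixture of the arcsine law by `√T`, `T` uniform, is the semicircle law. -/
lemma map_sqrt_mul_prod_arcsineLaw :
    ((volume.restrict (Set.Icc (0 : ℝ) 1)).prod arcsineLaw).map
      (fun p => Real.sqrt p.1 * p.2) = semicircleLaw := by
  refine Measure.ext_of_lintegral _ fun f hf => ?_
  rw [lintegral_map hf (by fun_prop), lintegral_prod _ (by fun_prop),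
    Measure.restrict_congr_set Ioc_ae_eq_Icc.symm,
    setLIntegral_congr_fun measurableSet_Ioc fun t ht => lintegral_arcsineLaw_sqrt_mul hf ht.1,
    lintegral_lintegral_swap (by fun_prop), semicircleLaw,
    lintegral_withDensity_eq_lintegral_mul _ _ hf]
  · refine lintegral_congr fun x => ?_
    rw [lintegral_mul_const _ (by fun_prop), lintegral_inv_sqrt_four_mul_sub_sq, Pi.mul_apply]
  · exact ((by fun_prop : Measurable fun x : ℝ => Real.sqrt (4 - x ^ 2) / (2 * Real.pi)).indicator
      measurableSet_Icc).ennreal_ofReal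

lemma integral_two_mul_cos_pow_even (m : ℕ) :
    ∫ θ in (0 : ℝ)..Real.pi, (2 * Real.cos θ) ^ (2 * m) = Real.pi * m.centralBinom := by
  induction m with
  | zero => simp
  | succ m ih =>
    simp only [mul_pow, intervalIntegral.integral_const_mul] at ih ⊢
    have hrec := Nat.succ_mul_centralBinom_succ m
    have hrec' : ((m : ℝ) + 1) * (m + 1).centralBinom = 2 * (2 * m + 1) * m.centralBinom := by
      exact_mod_cast hrec
    have h2 : (2 : ℝ) ^ (2 * (m + 1)) = 4 * 2 ^ (2 * m) := by ring
    rw [h2, show 2 * (m + 1) = 2 * m + 2 by ring, integral_cos_pow]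
    have hm : (m : ℝ) + 1 ≠ 0 := by positivity
    have hm2 : (2 : ℝ) * m + 2 ≠ 0 := by positivity
    simp only [Real.sin_pi, Real.sin_zero, mul_zero, sub_zero, zero_div, zero_add]
    push_cast
    apply mul_left_cancel₀ hm
    calc _ = 2 * (2 * m + 1) * (2 ^ (2 * m) * ∫ x in (0 : ℝ)..Real.pi, Real.cos x ^ (2 * m)) := by
            field_simp
            ring
      _ = _ := by rw [ih]; linear_combination -Real.pi * hrec'

lemma image_two_mul_cos_Ioo :
    (fun θ => 2 * Real.cos θ) '' Set.Ioo 0 Real.pi = Set.Ioo (-2 : ℝ) 2 := by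
  ext x
  constructor
  · rintro ⟨θ, hθ, rfl⟩
    have hs := Real.sin_pos_of_mem_Ioo hθ
    have := Real.sin_sq_add_cos_sq θ
    constructor <;> dsimp only <;> nlinarith
  · intro hx
    refine ⟨Real.arccos (x / 2), ⟨?_, ?_⟩, ?_⟩
    · rw [Real.arccos_pos]; linarith [hx.2]
    · refine lt_of_le_of_ne (Real.arccos_le_pi _) fun h => ?_
      rw [Real.arccos_eq_pi] at h
      linarith [hx.1]
    · dsimp only
      rw [Real.cos_arccos (by linarith [hx.1]) (by linarith [hx.2])]
      ring

/-- The even moments of the arcsine law are the central binomial coefficients. -/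
lemma integral_pow_arcsineLaw (m : ℕ) :
    ∫ w, w ^ (2 * m) ∂arcsineLaw = m.centralBinom := by
  rw [arcsineLaw, integral_withDensity_eq_integral_toReal_smul measurable_arcsine_density
    (Filter.Eventually.of_forall fun _ => ENNReal.ofReal_lt_top)]
  have hnn : ∀ x, 0 ≤ Set.indicator (Set.Ioo (-2 : ℝ) 2)
      (fun x => 1 / (Real.pi * Real.sqrt (4 - x ^ 2))) x :=
    Set.indicator_nonneg fun x _ => by positivity
  simp only [ENNReal.toReal_ofReal (hnn _), smul_eq_mul]
  simp_rw [← Set.indicator_mul_left _ _ fun x : ℝ => x ^ (2 * m)]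
  rw [integral_indicator measurableSet_Ioo, ← image_two_mul_cos_Ioo,
    integral_image_eq_integral_abs_deriv_smul (f' := fun θ => 2 * -Real.sin θ) measurableSet_Ioo
      (fun θ _ => ((Real.hasDerivAt_cos θ).const_mul 2).hasDerivWithinAt)]
  · have hpt : ∀ θ ∈ Set.Ioo 0 Real.pi,
        |2 * -Real.sin θ| • (1 / (Real.pi * Real.sqrt (4 - (2 * Real.cos θ) ^ 2)) *
          (2 * Real.cos θ) ^ (2 * m)) = Real.pi⁻¹ * (2 * Real.cos θ) ^ (2 * m) := by
      intro θ hθ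
      have hs := Real.sin_pos_of_mem_Ioo hθ
      have h4 : 4 - (2 * Real.cos θ) ^ 2 = (2 * Real.sin θ) ^ 2 := by
        linear_combination -4 * Real.sin_sq_add_cos_sq θ
      rw [h4, Real.sqrt_sq (by positivity), mul_neg, abs_neg, abs_of_pos (by positivity),
        smul_eq_mul]
      field_simp
    rw [setIntegral_congr_fun measurableSet_Ioo hpt, integral_const_mul,
      ← integral_Ioc_eq_integral_Ioo, ← intervalIntegral.integral_of_le Real.pi_pos.le,
      integral_two_mul_cos_pow_even, inv_mul_cancel_left₀ Real.pi_ne_zero]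
  · intro a ha b hb hab
    exact Real.injOn_cos (Set.Ioo_subset_Icc_self ha) (Set.Ioo_subset_Icc_self hb)
      (mul_left_cancel₀ two_ne_zero hab)

lemma integral_sqrt_pow_Icc (m : ℕ) :
    ∫ t in Set.Icc (0 : ℝ) 1, Real.sqrt t ^ (2 * m) = 1 / (m + 1) := by
  rw [setIntegral_congr_fun measurableSet_Icc (g := fun t => t ^ m)
    fun t ht => by simp only [pow_mul, Real.sq_sqrt ht.1],
    integral_Icc_eq_integral_Ioc, ← intervalIntegral.integral_of_le zero_le_one, integral_pow]
  simp

theorem stmt13 {Ω : Type*} [MeasurableSpace Ω] (μ : Measure Ω) [IsProbabilityMeasure μ]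
    (W T : Ω → ℝ) (hW : Measurable W) (hT : Measurable T)
    (hlawW : μ.map W = arcsineLaw)
    (hlawT : μ.map T = volume.restrict (Set.Icc (0 : ℝ) 1))
    (hind : IndepFun T W μ) :
    μ.map (fun ω => T ω ^ ((1 : ℝ) / 2) * W ω) = semicircleLaw ∧
    ∀ k : ℕ, Even k →
      ∫ ω, (T ω ^ ((1 : ℝ) / 2) * W ω) ^ k ∂μ = k.choose (k / 2) / (k / 2 + 1) := by
  simp only [← Real.sqrt_eq_rpow]
  constructor
  · rw [← map_sqrt_mul_prod_arcsineLaw, ← hlawT, ← hlawW,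
      ← (indepFun_iff_map_prod_eq_prod_map_map hT.aemeasurable hW.aemeasurable).1 hind,
      Measure.map_map (by fun_prop) (by fun_prop)]
    rfl
  · intro k hk
    obtain ⟨m, rfl⟩ := hk.exists_two_nsmul
    simp only [smul_eq_mul, mul_pow]
    have hprod := IndepFun.integral_fun_mul_eq_mul_integral
      (hind.comp (φ := fun t => Real.sqrt t ^ (2 * m)) (ψ := fun w => w ^ (2 * m))
        (by fun_prop) (by fun_prop)) (by fun_prop) (by fun_prop)
    simp only [Function.comp_apply] at hprod
    rw [hprod, ← integral_map (f := fun t => Real.sqrt t ^ (2 * m)) hT.aemeasurable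
      (by fun_prop), ← integral_map (f := fun w => w ^ (2 * m)) hW.aemeasurable (by fun_prop),
      hlawT, hlawW, integral_sqrt_pow_Icc, integral_pow_arcsineLaw,
      Nat.centralBinom_eq_two_mul_choose, Nat.mul_div_cancel_left m two_pos]
    push_cast
    field_simp
end
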